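/- arXiv:2202.11862 — 7 statements merged into one kernel-verified Lean document; each statement's English description precedes it below -/
import Mathlib

section
/- Let X be a finite type, let p be a pmf on X, and let x ∈ X. Then the infimum over all pmfs μ on X of D(μ‖p) + D(μ‖δ_x) equals log(1/p(x)) (the surprisal, or negative log-likelihood, of the event X = x under p), where δ_x is the point mass at x, and where both sides are interpreted in [0,∞] (so in particular both sides are ∞ when p(x) = 0). -/
open scoped BigOperators ENNReal

/-- A probability mass function on a finite type, as a nonnegative
real-valued function summing to 1. -/
def IsPMF {X : Type*} [Fintype X] (μ : X → ℝ) : Prop :=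
  (∀ x, 0 ≤ μ x) ∧ ∑ x, μ x = 1

open Classical in
/-- Relative entropy (KL divergence) `D(μ‖ν) = Σ_x μ(x) log(μ(x)/ν(x))`,
valued in `[0,∞]`, with the conventions `0 · log(0/a) = 0` and
`t · log(t/0) = ∞` for `t > 0`. -/
noncomputable def KLdiv {X : Type*} [Fintype X] (μ ν : X → ℝ) : ℝ≥0∞ :=
  if ∀ x, ν x = 0 → μ x = 0 then
    ENNReal.ofReal (∑ x, μ x * Real.log (μ x / ν x))
  else ⊤

/-- The point mass at `x`. -/
def deltaPMF {X : Type*} [DecidableEq X] (x : X) : X → ℝ :=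
  fun y => if y = x then 1 else 0

/-- Surprisal as inconsistency: the inconsistency of believing both the
distribution `p` and the event `X = x` is the surprisal `log(1/p(x))`,
both sides being `∞` when `p(x) = 0`. -/
theorem surprisal_as_inconsistency
    {X : Type*} [Fintype X] [DecidableEq X]
    (p : X → ℝ) (hp : IsPMF p) (x : X) :
    (⨅ μ : {μ : X → ℝ // IsPMF μ}, KLdiv μ.1 p + KLdiv μ.1 (deltaPMF x))
      = (if p x = 0 then ⊤ else ENNReal.ofReal (Real.log (1 / p x))) := by
  have key : ∀ μ : X → ℝ, IsPMF μ → KLdiv μ (deltaPMF x) ≠ ⊤ → μ = deltaPMF x := by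
    intro μ hμ h
    have h0 : ∀ y, y ≠ x → μ y = 0 := by
      unfold KLdiv at h
      split_ifs at h with hc
      · intro y hy
        exact hc y (by simp [deltaPMF, hy])
      · exact absurd rfl h
    have h1 : μ x = 1 := by
      rw [← hμ.2]
      exact (Finset.sum_eq_single x (fun y _ hy => h0 y hy) (by simp)).symm
    funext y
    by_cases hy : y = x
    · subst hy; simp [deltaPMF, h1]
    · simp [deltaPMF, hy, h0 y hy]
  have hd : IsPMF (deltaPMF x) := by
    constructor
    · intro y
      unfold deltaPMF
      split_ifs <;> norm_num
    · simp [deltaPMF]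
  have h2 : KLdiv (deltaPMF x) (deltaPMF x) = 0 := by
    unfold KLdiv
    rw [if_pos (fun _ h => h)]
    simp [deltaPMF]
  have h3 : KLdiv (deltaPMF x) p
      = (if p x = 0 then ⊤ else ENNReal.ofReal (Real.log (1 / p x))) := by
    unfold KLdiv
    by_cases hx : p x = 0
    · rw [if_pos hx, if_neg]
      intro h
      have := h x hx
      simp [deltaPMF] at this
    · rw [if_neg hx, if_pos]
      · congr 1
        rw [Finset.sum_eq_single x]
        · simp [deltaPMF]
        · intro y _ hy
          simp [deltaPMF, hy]
        · simp
      · intro y hy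
        have : y ≠ x := by
          rintro rfl
          exact hx hy
        simp [deltaPMF, this]
  rw [← h3]
  apply le_antisymm
  · refine (iInf_le _ ⟨deltaPMF x, hd⟩).trans ?_
    simp [h2]
  · refine le_iInf ?_
    rintro ⟨μ, hμ⟩
    by_cases h : KLdiv μ (deltaPMF x) = ⊤
    · simp [h]
    · rw [← key μ hμ h]
      simp
end

section
/- Let X and Y be finite types, let f, h : X → Y be functions (true labeling function and deterministic predictor), let D be a pmf on X, and let r, s, β > 0. Let A := {x : f(x) = h(x)} and suppose D(A) := Σ_{x ∈ A} D(x) > 0. Then the infimum, over all pmfs μ on X × Y (with X-marginal μ_X and conditionals μ(·|x) for μ_X(x) > 0), of β·D(μ_X‖D) + r·Σ_{x : μ_X(x)>0} μ_X(x)·D( μ(·|x) ‖ δ_{h(x)} ) + s·Σ_{x : μ_X(x)>0} μ_X(x)·D( μ(·|x) ‖ δ_{f(x)} ) equals −β·log D(A), i.e., β times the negative log of the accuracy of h; in particular the value is independent of r and s. -/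
open scoped BigOperators ENNReal

theorem aux_pt (p d a : ℝ) (hp : 0 ≤ p) (hd : 0 ≤ d) (ha : 0 < a) (h0 : d = 0 → p = 0) :
    p * Real.log (1 / a) + p - d / a ≤ p * Real.log (p / d) := by
  rcases hp.eq_or_lt with rfl | hp
  · have : 0 ≤ d / a := by positivity
    simpa using this
  · have hd' : 0 < d := lt_of_le_of_ne hd (fun h => hp.ne' (h0 h.symm))
    have h1 := Real.log_le_sub_one_of_pos (show 0 < d / (a * p) by positivity)
    have e1 : Real.log (d / (a * p)) = Real.log (1 / a) - Real.log (p / d) := by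
      rw [← Real.log_div (by positivity) (by positivity)]
      congr 1
      field_simp
    rw [e1] at h1
    have h2 := mul_le_mul_of_nonneg_left h1 hp.le
    have e2 : p * (d / (a * p) - 1) = d / a - p := by field_simp
    rw [e2] at h2
    linarith

theorem aux_delta {Y : Type*} [Fintype Y] [DecidableEq Y] (c : Y) (q : Y → ℝ)
    (hq : ∀ y, q y = if y = c then 1 else 0) : KLdiv q (deltaPMF c) = 0 := by
  have : q = deltaPMF c := funext hq
  subst this
  unfold KLdiv
  rw [if_pos (fun x hx => hx)]
  rw [Finset.sum_eq_zero, ENNReal.ofReal_zero]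
  intro x _
  by_cases hx : x = c <;> simp [deltaPMF, hx]

theorem aux_top {Y : Type*} [Fintype Y] [DecidableEq Y] (c : Y) (q : Y → ℝ)
    (hq : KLdiv q (deltaPMF c) ≠ ⊤) (y : Y) (hy : y ≠ c) : q y = 0 := by
  unfold KLdiv at hq
  split_ifs at hq with h1
  · exact h1 y (by simp [deltaPMF, hy])
  · exact absurd rfl hq

theorem aux_term {X : Type*} (S : Finset X) (r : ℝ) (hr : 0 < r) (p : X → ℝ) (K : X → ℝ≥0∞)
    (hT : ENNReal.ofReal r * ∑ x ∈ S, ENNReal.ofReal (p x) * K x ≠ ⊤)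
    (x : X) (hx : x ∈ S) (hp : 0 < p x) : K x ≠ ⊤ := by
  intro hK
  apply hT
  have : ∑ x ∈ S, ENNReal.ofReal (p x) * K x = ⊤ := by
    rw [ENNReal.sum_eq_top]
    refine ⟨x, hx, ?_⟩
    rw [hK, ENNReal.mul_top]
    simpa using hp
  rw [this, ENNReal.mul_top]
  simpa using hr

/-- Log accuracy as inconsistency: the inconsistency of believing a
deterministic predictor `h`, a true labelling function `f` (each with any
positive confidences `r`, `s`) and the input distribution `D` with
confidence `β` equals `β` times the negative log accuracy of `h`;
in particular it does not depend on `r` and `s`. -/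
theorem log_accuracy_as_inconsistency
    {X Y : Type*} [Fintype X] [Fintype Y] [DecidableEq X] [DecidableEq Y]
    (f h : X → Y) (D : X → ℝ) (hD : IsPMF D)
    (r s β : ℝ) (hr : 0 < r) (hs : 0 < s) (hβ : 0 < β)
    (DA : ℝ) (hDA : DA = ∑ x ∈ Finset.univ.filter (fun x => f x = h x), D x)
    (hDApos : 0 < DA) :
    (⨅ μ : {μ : X × Y → ℝ // IsPMF μ},
        ENNReal.ofReal β * KLdiv (fun x => ∑ y, μ.1 (x, y)) D
        + ENNReal.ofReal r *
            ∑ x ∈ Finset.univ.filter (fun x => 0 < ∑ y, μ.1 (x, y)),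
              ENNReal.ofReal (∑ y, μ.1 (x, y)) *
                KLdiv (fun y => μ.1 (x, y) / ∑ y', μ.1 (x, y')) (deltaPMF (h x))
        + ENNReal.ofReal s *
            ∑ x ∈ Finset.univ.filter (fun x => 0 < ∑ y, μ.1 (x, y)),
              ENNReal.ofReal (∑ y, μ.1 (x, y)) *
                KLdiv (fun y => μ.1 (x, y) / ∑ y', μ.1 (x, y')) (deltaPMF (f x)))
      = ENNReal.ofReal (β * Real.log (1 / DA)) := by
  have hDx : ∀ x, 0 ≤ D x := hD.1
  apply le_antisymm
  · set m : X × Y → ℝ := fun z => if f z.1 = h z.1 ∧ z.2 = h z.1 then D z.1 / DA else 0 with hm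
    have hmarg : ∀ x, ∑ y, m (x, y) = if f x = h x then D x / DA else 0 := by
      intro x
      by_cases hx : f x = h x <;> simp [hm, hx]
    have hpm : IsPMF m := by
      refine ⟨fun z => ?_, ?_⟩
      · simp only [hm]
        split_ifs
        · exact div_nonneg (hDx _) hDApos.le
        · exact le_rfl
      · rw [Fintype.sum_prod_type]
        simp only [hmarg]
        rw [← Finset.sum_filter, ← Finset.sum_div, ← hDA, div_self hDApos.ne']
    refine (iInf_le _ ⟨m, hpm⟩).trans ?_
    have key : ∀ g : X → Y, (∀ x, f x = h x → g x = h x) → ∑ x ∈ Finset.univ.filter (fun x => 0 < ∑ y, m (x, y)),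
              ENNReal.ofReal (∑ y, m (x, y)) *
                KLdiv (fun y => m (x, y) / ∑ y', m (x, y')) (deltaPMF (g x)) = 0 := by
      intro g hg
      apply Finset.sum_eq_zero
      intro x hx
      have hx' := (Finset.mem_filter.mp hx).2
      rw [aux_delta, mul_zero]
      intro y
      rw [hmarg] at hx' ⊢
      by_cases hfx : f x = h x
      · rw [if_pos hfx] at hx' ⊢
        rw [hg x hfx]
        by_cases hy : y = h x
        · simp only [hm, hfx, hy, and_self, if_true]
          exact div_self hx'.ne'
        · simp [hm, hy]
      · simp [hfx] at hx'
    simp only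
    rw [key h (fun _ _ => rfl), key f (fun _ hx => hx), mul_zero, mul_zero, add_zero, add_zero,
      ENNReal.ofReal_mul hβ.le]
    gcongr
    unfold KLdiv
    simp only [hmarg]
    rw [if_pos]
    · apply ENNReal.ofReal_le_ofReal
      apply le_of_eq
      have : ∀ x, (if f x = h x then D x / DA else 0) * Real.log ((if f x = h x then D x / DA else 0) / D x)
          = if f x = h x then D x / DA * Real.log (1 / DA) else 0 := by
        intro x
        split_ifs
        · by_cases h0 : D x = 0
          · simp [h0]
          · congr 2
            field_simp
        · simp
      simp only [this]
      rw [← Finset.sum_filter, ← Finset.sum_mul, ← Finset.sum_div, ← hDA, div_self hDApos.ne', one_mul]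
    · intro x hx
      simp [hx]
  · refine le_iInf ?_
    rintro ⟨m, hm0, hm1⟩
    simp only
    set p : X → ℝ := fun x => ∑ y, m (x, y) with hp
    have hp0 : ∀ x, 0 ≤ p x := fun x => Finset.sum_nonneg (fun y _ => hm0 _)
    have hp1 : ∑ x, p x = 1 := by rw [← hm1, Fintype.sum_prod_type]
    by_cases hT : ENNReal.ofReal r *
            ∑ x ∈ Finset.univ.filter (fun x => 0 < p x),
              ENNReal.ofReal (p x) *
                KLdiv (fun y => m (x, y) / p x) (deltaPMF (h x)) = ⊤
    · change _ ≤ _ + ENNReal.ofReal r *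
            ∑ x ∈ Finset.univ.filter (fun x => 0 < p x),
              ENNReal.ofReal (p x) *
                KLdiv (fun y => m (x, y) / p x) (deltaPMF (h x)) + _
      rw [hT]; simp
    by_cases hS : ENNReal.ofReal s *
            ∑ x ∈ Finset.univ.filter (fun x => 0 < p x),
              ENNReal.ofReal (p x) *
                KLdiv (fun y => m (x, y) / p x) (deltaPMF (f x)) = ⊤
    · change _ ≤ _ + ENNReal.ofReal s *
            ∑ x ∈ Finset.univ.filter (fun x => 0 < p x),
              ENNReal.ofReal (p x) *
                KLdiv (fun y => m (x, y) / p x) (deltaPMF (f x))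
      rw [hS]; simp
    have hsupp : ∀ x, f x ≠ h x → p x = 0 := by
      intro x hx
      by_contra hne
      have hpos : 0 < p x := lt_of_le_of_ne (hp0 x) (Ne.symm hne)
      have hmem : x ∈ Finset.univ.filter (fun x => 0 < p x) := by simp [hpos]
      have h1 := aux_top _ _ (aux_term _ r hr p _ hT x hmem hpos)
      have h2 := aux_top _ _ (aux_term _ s hs p _ hS x hmem hpos)
      apply hne
      apply Finset.sum_eq_zero
      intro y _
      have h3 : m (x, y) / p x = 0 := by
        by_cases hy : y = h x
        · exact h2 y (fun h' => hx (h'.symm.trans hy))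
        · exact h1 y hy
      rcases div_eq_zero_iff.mp h3 with h4 | h4
      · exact h4
      · exact absurd h4 hne
    rw [add_assoc]
    refine le_trans ?_ le_self_add
    rw [ENNReal.ofReal_mul hβ.le]
    gcongr
    change _ ≤ KLdiv p D
    unfold KLdiv
    split_ifs with hac
    · apply ENNReal.ofReal_le_ofReal
      have hpt : ∀ x, p x * Real.log (1 / DA) + p x - (if f x = h x then D x / DA else 0)
          ≤ p x * Real.log (p x / D x) := by
        intro x
        split_ifs with hx
        · exact aux_pt _ _ _ (hp0 x) (hDx x) hDApos (hac x)
        · simp [hsupp x hx]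
      have hsum := Finset.sum_le_sum (fun x (_ : x ∈ Finset.univ) => hpt x)
      rw [Finset.sum_sub_distrib, Finset.sum_add_distrib, ← Finset.sum_mul, hp1,
        ← Finset.sum_filter, ← Finset.sum_div, ← hDA, div_self hDApos.ne'] at hsum
      linarith
    · exact le_top
end

section
/- Let X be a finite type, D a pmf on X, f, h : X → ℝ, s, t : X → ℝ with s(x) > 0 and t(x) > 0 for all x, and β₁, β₂ > 0. For each x let N(m,σ²) denote the Gaussian probability measure on ℝ with mean m and variance σ², and let KL denote the Kullback–Leibler divergence between probability measures on ℝ. Then the infimum, over all families (μ_x)_{x ∈ X} of probability measures on ℝ, of Σ_x D(x)·[ β₁·KL( μ_x ‖ N(f(x), s(x)²) ) + β₂·KL( μ_x ‖ N(h(x), t(x)²) ) ] equals Σ_x D(x)·[ (β₁+β₂)·log( QM(x)/GM(x) ) + (1/2)·(β₁β₂/(β₁+β₂))·( (f(x) − h(x)) / QM(x) )² ], where QM(x) := sqrt( (β₂·s(x)² + β₁·t(x)²) / (β₁+β₂) ) and GM(x) := s(x)^{β₂/(β₁+β₂)} · t(x)^{β₁/(β₁+β₂)} are the weighted quadratic and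 geometric means of s(x) and t(x) with weights (β₂, β₁)/(β₁+β₂). -/
open scoped BigOperators ENNReal NNReal
open MeasureTheory ProbabilityTheory

open Classical in
/-- Kullback–Leibler divergence `∫ log(dμ/dν) dμ ∈ [0,∞]` between measures
on `ℝ`, equal to `∞` when `μ` is not absolutely continuous with respect to
`ν` (or when the log-density is not integrable). -/
noncomputable def klDivM (μ ν : Measure ℝ) : ℝ≥0∞ :=
  if μ ≪ ν ∧ Integrable (fun y => Real.log (μ.rnDeriv ν y).toReal) μ then
    ENNReal.ofReal (∫ y, Real.log ((μ.rnDeriv ν y).toReal) ∂μ)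
  else ⊤

lemma log_gaussianPDFReal_aux (m : ℝ) (v : ℝ≥0) (hv : v ≠ 0) (y : ℝ) :
    Real.log (gaussianPDFReal m v y)
      = -(1 / 2) * Real.log (2 * Real.pi) - (1 / 2) * Real.log v - (y - m) ^ 2 / (2 * v) := by
  have hv' : (0 : ℝ) < v := by exact_mod_cast pos_iff_ne_zero.mpr hv
  have hpi := Real.pi_pos
  rw [gaussianPDFReal, Real.log_mul (by positivity) (Real.exp_pos _).ne', Real.log_exp,
    Real.log_inv, Real.log_sqrt (by positivity), Real.log_mul (by positivity) (by positivity)]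
  ring

lemma log_gaussianPDFReal_aux2 (m : ℝ) (v : ℝ≥0) (w : ℝ) (hw : (v : ℝ) = w) (hv : v ≠ 0) (y : ℝ) :
    Real.log (gaussianPDFReal m v y)
      = -(1 / 2) * Real.log (2 * Real.pi) - (1 / 2) * Real.log w - (y - m) ^ 2 / (2 * w) := by
  subst hw
  exact log_gaussianPDFReal_aux m v hv y

lemma llr_gaussianReal_aux (μ : Measure ℝ) [IsProbabilityMeasure μ] (hμ : μ ≪ volume)
    (m : ℝ) (v : ℝ≥0) (hv : v ≠ 0) :
    (fun y => Real.log (μ.rnDeriv (gaussianReal m v) y).toReal) =ᵐ[μ]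
      fun y => Real.log (μ.rnDeriv volume y).toReal - Real.log (gaussianPDFReal m v y) := by
  have hμν : μ ≪ gaussianReal m v := hμ.trans (gaussianReal_absolutelyContinuous' m hv)
  have h1 := hμ.ae_le (Measure.rnDeriv_mul_rnDeriv (κ := (volume : Measure ℝ)) hμν)
  have h2 := hμ.ae_le (rnDeriv_gaussianReal m v)
  have h3 := Measure.rnDeriv_pos hμν
  have h4 := hμν.ae_le (Measure.rnDeriv_lt_top μ (gaussianReal m v))
  filter_upwards [h1, h2, h3, h4] with y h1 h2 h3 h4
  rw [← h1, Pi.mul_apply, h2, ENNReal.toReal_mul, toReal_gaussianPDF, Real.log_mul]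
  · ring
  · exact (ENNReal.toReal_pos h3.ne' h4.ne).ne'
  · exact (gaussianPDFReal_pos m v y hv).ne'

lemma gibbs_aux (μ ν : Measure ℝ) [IsProbabilityMeasure μ] [IsProbabilityMeasure ν]
    (h : μ ≪ ν) (hi : Integrable (fun y => Real.log (μ.rnDeriv ν y).toReal) μ) :
    0 ≤ ∫ y, Real.log (μ.rnDeriv ν y).toReal ∂μ := by
  have := InformationTheory.integral_llr_add_sub_measure_univ_nonneg h hi
  simpa [llr] using this

lemma integrable_llr_gaussian_aux (m m' : ℝ) (v v' : ℝ≥0) (hv : v ≠ 0) (hv' : v' ≠ 0) :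
    Integrable (fun y => Real.log ((gaussianReal m v).rnDeriv (gaussianReal m' v') y).toReal)
      (gaussianReal m v) := by
  have hac := gaussianReal_absolutelyContinuous m hv
  rw [integrable_congr (llr_gaussianReal_aux _ hac m' v' hv')]
  have h2 := hac.ae_le (rnDeriv_gaussianReal m v)
  have : (fun y => Real.log ((gaussianReal m v).rnDeriv volume y).toReal
      - Real.log (gaussianPDFReal m' v' y)) =ᵐ[gaussianReal m v]
      fun y => Real.log (gaussianPDFReal m v y) - Real.log (gaussianPDFReal m' v' y) := by
    filter_upwards [h2] with y h2
    rw [h2, toReal_gaussianPDF]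
  rw [integrable_congr this]
  have hsq : ∀ c : ℝ, Integrable (fun y => (y - c) ^ 2) (gaussianReal m v) := fun c =>
    ((memLp_id_gaussianReal (μ := m) (v := v) 2).sub (memLp_const c)).integrable_sq
  simp only [log_gaussianPDFReal_aux _ _ hv, log_gaussianPDFReal_aux _ _ hv']
  exact ((integrable_const _).sub ((hsq m).div_const _)).sub
    ((integrable_const _).sub ((hsq m').div_const _))

/-- Abstract version with a pointwise identity between log densities. -/
lemma core_aux (m₁ m₂ m : ℝ) (v₁ v₂ v : ℝ≥0) (h₁ : v₁ ≠ 0) (h₂ : v₂ ≠ 0) (hv : v ≠ 0)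
    (β₁ β₂ C : ℝ) (hβ₁ : 0 < β₁) (hβ₂ : 0 < β₂)
    (hC : ∀ y, (β₁ + β₂) * Real.log (gaussianPDFReal m v y)
      = β₁ * Real.log (gaussianPDFReal m₁ v₁ y) + β₂ * Real.log (gaussianPDFReal m₂ v₂ y) + C) :
    0 ≤ C ∧
    (ENNReal.ofReal β₁ * klDivM (gaussianReal m v) (gaussianReal m₁ v₁)
      + ENNReal.ofReal β₂ * klDivM (gaussianReal m v) (gaussianReal m₂ v₂)
        = ENNReal.ofReal C) ∧
    ∀ μ : Measure ℝ, IsProbabilityMeasure μ → ENNReal.ofReal C ≤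
      ENNReal.ofReal β₁ * klDivM μ (gaussianReal m₁ v₁)
        + ENNReal.ofReal β₂ * klDivM μ (gaussianReal m₂ v₂) := by
  -- the main identity
  have key : ∀ μ : Measure ℝ, IsProbabilityMeasure μ → μ ≪ volume →
      Integrable (fun y => Real.log (μ.rnDeriv (gaussianReal m₁ v₁) y).toReal) μ →
      Integrable (fun y => Real.log (μ.rnDeriv (gaussianReal m₂ v₂) y).toReal) μ →
      (Integrable (fun y => Real.log (μ.rnDeriv (gaussianReal m v) y).toReal) μ ∧
      β₁ * (∫ y, Real.log (μ.rnDeriv (gaussianReal m₁ v₁) y).toReal ∂μ)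
        + β₂ * (∫ y, Real.log (μ.rnDeriv (gaussianReal m₂ v₂) y).toReal ∂μ)
        = (β₁ + β₂) * (∫ y, Real.log (μ.rnDeriv (gaussianReal m v) y).toReal ∂μ) + C) ∧
      ENNReal.ofReal β₁ * klDivM μ (gaussianReal m₁ v₁)
        + ENNReal.ofReal β₂ * klDivM μ (gaussianReal m₂ v₂)
        = ENNReal.ofReal (β₁ * (∫ y, Real.log (μ.rnDeriv (gaussianReal m₁ v₁) y).toReal ∂μ)
        + β₂ * (∫ y, Real.log (μ.rnDeriv (gaussianReal m₂ v₂) y).toReal ∂μ)) := by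
    intro μ hp hμ hi₁ hi₂
    have ac₁ := hμ.trans (gaussianReal_absolutelyContinuous' m₁ h₁)
    have ac₂ := hμ.trans (gaussianReal_absolutelyContinuous' m₂ h₂)
    have g₁ := gibbs_aux _ _ ac₁ hi₁
    have g₂ := gibbs_aux _ _ ac₂ hi₂
    refine ⟨?_, ?_⟩
    · have e : (fun y => Real.log (μ.rnDeriv (gaussianReal m v) y).toReal) =ᵐ[μ]
          fun y => (β₁ + β₂)⁻¹ * ((β₁ * Real.log (μ.rnDeriv (gaussianReal m₁ v₁) y).toReal
            + β₂ * Real.log (μ.rnDeriv (gaussianReal m₂ v₂) y).toReal) - C) := by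
        filter_upwards [llr_gaussianReal_aux μ hμ m v hv, llr_gaussianReal_aux μ hμ m₁ v₁ h₁,
          llr_gaussianReal_aux μ hμ m₂ v₂ h₂] with y a b c
        have := hC y
        rw [a, b, c, eq_inv_mul_iff_mul_eq₀ (by positivity)]
        linear_combination -this
      have hsum : Integrable (fun y => β₁ * Real.log (μ.rnDeriv (gaussianReal m₁ v₁) y).toReal
            + β₂ * Real.log (μ.rnDeriv (gaussianReal m₂ v₂) y).toReal) μ :=
        (hi₁.const_mul β₁).add (hi₂.const_mul β₂)
      refine ⟨?_, ?_⟩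
      · rw [integrable_congr e]
        exact (hsum.sub (integrable_const C)).const_mul _
      · rw [integral_congr_ae e, integral_const_mul, integral_sub hsum (integrable_const C)]
        rw [integral_add (hi₁.const_mul β₁) (hi₂.const_mul β₂), integral_const_mul,
          integral_const_mul]
        have : β₁ + β₂ ≠ 0 := by positivity
        rw [mul_inv_cancel_left₀ this]
        simp
    · rw [klDivM, klDivM, if_pos ⟨ac₁, hi₁⟩, if_pos ⟨ac₂, hi₂⟩,
        ← ENNReal.ofReal_mul hβ₁.le, ← ENNReal.ofReal_mul hβ₂.le,
        ← ENNReal.ofReal_add (by positivity) (by positivity)]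
  have hac := gaussianReal_absolutelyContinuous m hv
  have i₁ := integrable_llr_gaussian_aux m m₁ v v₁ hv h₁
  have i₂ := integrable_llr_gaussian_aux m m₂ v v₂ hv h₂
  have g₁ := gibbs_aux _ _ (hac.trans (gaussianReal_absolutelyContinuous' m₁ h₁)) i₁
  have g₂ := gibbs_aux _ _ (hac.trans (gaussianReal_absolutelyContinuous' m₂ h₂)) i₂
  obtain ⟨⟨-, k⟩, k'⟩ := key (gaussianReal m v) inferInstance hac i₁ i₂
  have z : ∫ y, Real.log ((gaussianReal m v).rnDeriv (gaussianReal m v) y).toReal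
      ∂(gaussianReal m v) = 0 := by
    have := integral_congr_ae (llr_self (gaussianReal m v))
    simpa [llr] using this
  rw [z, mul_zero, zero_add] at k
  refine ⟨?_, ?_, ?_⟩
  · rw [← k]; positivity
  · rw [k', k]
  · intro μ hp
    by_cases c₁ : μ ≪ gaussianReal m₁ v₁ ∧
        Integrable (fun y => Real.log (μ.rnDeriv (gaussianReal m₁ v₁) y).toReal) μ
    · by_cases c₂ : μ ≪ gaussianReal m₂ v₂ ∧
          Integrable (fun y => Real.log (μ.rnDeriv (gaussianReal m₂ v₂) y).toReal) μ
      · have hμ : μ ≪ volume := c₁.1.trans (gaussianReal_absolutelyContinuous m₁ h₁)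
        obtain ⟨⟨hi, e⟩, e'⟩ := key μ hp hμ c₁.2 c₂.2
        have g := gibbs_aux _ _ (hμ.trans (gaussianReal_absolutelyContinuous' m hv)) hi
        rw [e', e]
        apply ENNReal.ofReal_le_ofReal
        have : 0 ≤ (β₁ + β₂) * ∫ y, Real.log (μ.rnDeriv (gaussianReal m v) y).toReal ∂μ := by
          positivity
        linarith
      · have : klDivM μ (gaussianReal m₂ v₂) = ⊤ := if_neg c₂
        rw [this, ENNReal.mul_top (by simpa using hβ₂)]
        simp
    · have : klDivM μ (gaussianReal m₁ v₁) = ⊤ := if_neg c₁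
      rw [this, ENNReal.mul_top (by simpa using hβ₁)]
      simp

lemma identity_aux (f h s t β₁ β₂ Q G : ℝ) (hs : 0 < s) (ht : 0 < t)
    (hβ₁ : 0 < β₁) (hβ₂ : 0 < β₂)
    (hQ : Q = Real.sqrt ((β₂ * s ^ 2 + β₁ * t ^ 2) / (β₁ + β₂)))
    (hG : G = s ^ (β₂ / (β₁ + β₂)) * t ^ (β₁ / (β₁ + β₂))) :
    ∃ (m : ℝ) (v : ℝ≥0), v ≠ 0 ∧ ∀ y, (β₁ + β₂) * Real.log (gaussianPDFReal m v y)
      = β₁ * Real.log (gaussianPDFReal f ⟨s ^ 2, sq_nonneg _⟩ y)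
        + β₂ * Real.log (gaussianPDFReal h ⟨t ^ 2, sq_nonneg _⟩ y)
        + ((β₁ + β₂) * Real.log (Q / G)
              + (1 / 2) * (β₁ * β₂ / (β₁ + β₂)) * ((f - h) / Q) ^ 2) := by
  have hQ2 : Q ^ 2 = (β₂ * s ^ 2 + β₁ * t ^ 2) / (β₁ + β₂) := by
    rw [hQ, Real.sq_sqrt (by positivity)]
  have hQp : 0 < Q := by rw [hQ]; positivity
  have hGp : 0 < G := by rw [hG]; positivity
  have hlG : Real.log G = β₂ / (β₁ + β₂) * Real.log s + β₁ / (β₁ + β₂) * Real.log t := by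
    rw [hG, Real.log_mul (by positivity) (by positivity), Real.log_rpow hs, Real.log_rpow ht]
  have hvp : 0 < (s * t / Q) ^ 2 := by positivity
  refine ⟨(β₁ * f * t ^ 2 + β₂ * h * s ^ 2) / (β₂ * s ^ 2 + β₁ * t ^ 2),
    ⟨(s * t / Q) ^ 2, hvp.le⟩, ?_, ?_⟩
  · intro h0
    exact hvp.ne' (congrArg NNReal.toReal h0)
  · intro y
    have n1 : (⟨s ^ 2, sq_nonneg _⟩ : ℝ≥0) ≠ 0 := fun h0 =>
      (by positivity : s ^ 2 ≠ 0) (congrArg NNReal.toReal h0)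
    have n2 : (⟨t ^ 2, sq_nonneg _⟩ : ℝ≥0) ≠ 0 := fun h0 =>
      (by positivity : t ^ 2 ≠ 0) (congrArg NNReal.toReal h0)
    have n3 : (⟨(s * t / Q) ^ 2, hvp.le⟩ : ℝ≥0) ≠ 0 := fun h0 =>
      hvp.ne' (congrArg NNReal.toReal h0)
    rw [log_gaussianPDFReal_aux2 _ _ (s ^ 2) rfl n1, log_gaussianPDFReal_aux2 _ _ (t ^ 2) rfl n2,
      log_gaussianPDFReal_aux2 _ _ ((s * t / Q) ^ 2) rfl n3]
    rw [Real.log_pow, Real.log_pow, Real.log_pow, Real.log_div (by positivity) (by positivity),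
      Real.log_div (by positivity) (by positivity), Real.log_mul hs.ne' ht.ne',
      hlG, div_pow, div_pow, hQ2]
    have hB : β₁ + β₂ ≠ 0 := by positivity
    have hE : β₂ * s ^ 2 + β₁ * t ^ 2 ≠ 0 := by positivity
    push_cast
    field_simp
    ring

/-- Inconsistency of two conditional Gaussian predictors: the minimal
`D`-expected weighted KL divergence of a family `(μ_x)` of distributions on
`ℝ` from the Gaussians `N(f(x), s(x)²)` and `N(h(x), t(x)²)` (with
confidences `β₁`, `β₂`) is expressed via the weighted quadratic and
geometric means of the standard deviations. -/
theorem inconsistency_two_gaussians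
    {X : Type*} [Fintype X]
    (D : X → ℝ) (hD : (∀ x, 0 ≤ D x) ∧ ∑ x, D x = 1)
    (f h s t : X → ℝ) (hs : ∀ x, 0 < s x) (ht : ∀ x, 0 < t x)
    (β₁ β₂ : ℝ) (hβ₁ : 0 < β₁) (hβ₂ : 0 < β₂)
    (QM GM : X → ℝ)
    (hQM : ∀ x, QM x = Real.sqrt ((β₂ * s x ^ 2 + β₁ * t x ^ 2) / (β₁ + β₂)))
    (hGM : ∀ x, GM x = s x ^ (β₂ / (β₁ + β₂)) * t x ^ (β₁ / (β₁ + β₂))) :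
    (⨅ μ : X → {m : Measure ℝ // IsProbabilityMeasure m},
        ∑ x, ENNReal.ofReal (D x) *
          (ENNReal.ofReal β₁ *
              klDivM (μ x).1 (gaussianReal (f x) ⟨s x ^ 2, sq_nonneg _⟩)
            + ENNReal.ofReal β₂ *
              klDivM (μ x).1 (gaussianReal (h x) ⟨t x ^ 2, sq_nonneg _⟩)))
      = ENNReal.ofReal
          (∑ x, D x *
            ((β₁ + β₂) * Real.log (QM x / GM x)
              + (1 / 2) * (β₁ * β₂ / (β₁ + β₂)) * ((f x - h x) / QM x) ^ 2)) := by
  have H : ∀ x, ∃ μ : Measure ℝ, IsProbabilityMeasure μ ∧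
      0 ≤ ((β₁ + β₂) * Real.log (QM x / GM x)
              + (1 / 2) * (β₁ * β₂ / (β₁ + β₂)) * ((f x - h x) / QM x) ^ 2) ∧
      (ENNReal.ofReal β₁ *
              klDivM μ (gaussianReal (f x) ⟨s x ^ 2, sq_nonneg _⟩)
            + ENNReal.ofReal β₂ *
              klDivM μ (gaussianReal (h x) ⟨t x ^ 2, sq_nonneg _⟩)
        = ENNReal.ofReal ((β₁ + β₂) * Real.log (QM x / GM x)
              + (1 / 2) * (β₁ * β₂ / (β₁ + β₂)) * ((f x - h x) / QM x) ^ 2)) ∧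
      ∀ μ : Measure ℝ, IsProbabilityMeasure μ →
        ENNReal.ofReal ((β₁ + β₂) * Real.log (QM x / GM x)
              + (1 / 2) * (β₁ * β₂ / (β₁ + β₂)) * ((f x - h x) / QM x) ^ 2)
        ≤ ENNReal.ofReal β₁ *
              klDivM μ (gaussianReal (f x) ⟨s x ^ 2, sq_nonneg _⟩)
            + ENNReal.ofReal β₂ *
              klDivM μ (gaussianReal (h x) ⟨t x ^ 2, sq_nonneg _⟩) := by
    intro x
    obtain ⟨m, v, hv, hid⟩ := identity_aux (f x) (h x) (s x) (t x) β₁ β₂ (QM x) (GM x)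
      (hs x) (ht x) hβ₁ hβ₂ (hQM x) (hGM x)
    have n1 : (⟨s x ^ 2, sq_nonneg _⟩ : ℝ≥0) ≠ 0 := fun h0 =>
      (pow_pos (hs x) 2).ne' (congrArg NNReal.toReal h0)
    have n2 : (⟨t x ^ 2, sq_nonneg _⟩ : ℝ≥0) ≠ 0 := fun h0 =>
      (pow_pos (ht x) 2).ne' (congrArg NNReal.toReal h0)
    exact ⟨gaussianReal m v, inferInstance,
      core_aux _ _ m _ _ v n1 n2 hv β₁ β₂ _ hβ₁ hβ₂ hid⟩
  choose μ hp h0 heq hle using H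
  rw [ENNReal.ofReal_sum_of_nonneg (fun x _ => mul_nonneg (hD.1 x) (h0 x))]
  simp only [ENNReal.ofReal_mul (hD.1 _)]
  apply le_antisymm
  · refine (iInf_le _ (fun x => ⟨μ x, hp x⟩)).trans (le_of_eq ?_)
    exact Finset.sum_congr rfl fun x _ => by rw [heq x]
  · refine le_iInf fun ν => Finset.sum_le_sum fun x _ => ?_
    gcongr
    exact hle x _ (ν x).2
end

section
/- Let Θ and Y be finite types, let p : Θ → (pmf on Y) be a parameterized model, q a pmf on Θ with q(θ₀) > 0 for a given θ₀ ∈ Θ, D a pmf on Y with p(y|θ₀) > 0 whenever D(y) > 0, and β ≥ 0. Then the infimum, over all pmfs μ on Θ × Y whose Θ-marginal is the point mass δ_{θ₀} and whose Y-marginal is D, of Σ_{θ : μ_Θ(θ)>0} μ_Θ(θ)·D( μ(Y|θ) ‖ p(·|θ) ) + β·D( μ_Θ ‖ q ) equals Σ_y D(y)·log(1/p(y|θ₀)) + β·log(1/q(θ₀)) − H(D). (In words: the inconsistency of believing a trusted data distribution D, a prior q over parameters with confidence β, the model p, and the event Θ = θ₀, is the cross-entropy loss of p(·|θ₀) on D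 plus the regularizer β·log(1/q(θ₀)), minus a constant H(D) depending only on the data.) -/
open scoped BigOperators ENNReal

/-- Regularizers as priors: the inconsistency of believing a trusted data
distribution `D` on `Y`, a model `p(Y|Θ)`, a prior `q(Θ)` with confidence
`β`, and the event `Θ = θ₀`, equals the cross-entropy loss of `p(·|θ₀)` on
`D`, plus the regularizer `β·log(1/q(θ₀))`, minus the constant `H(D)`. -/
theorem regularized_loss_as_inconsistency
    {Θ Y : Type*} [Fintype Θ] [Fintype Y] [DecidableEq Θ]
    (p : Θ → Y → ℝ) (hp : ∀ θ, IsPMF (p θ))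
    (q : Θ → ℝ) (hq : IsPMF q) (θ₀ : Θ) (hq₀ : 0 < q θ₀)
    (D : Y → ℝ) (hD : IsPMF D) (hpos : ∀ y, 0 < D y → 0 < p θ₀ y)
    (β : ℝ) (hβ : 0 ≤ β) :
    (⨅ μ : {μ : Θ × Y → ℝ // IsPMF μ
        ∧ (∀ θ, (∑ y, μ (θ, y)) = if θ = θ₀ then 1 else 0)
        ∧ (∀ y, (∑ θ, μ (θ, y)) = D y)},
        (∑ θ ∈ Finset.univ.filter (fun θ => 0 < ∑ y, μ.1 (θ, y)),
          ENNReal.ofReal (∑ y, μ.1 (θ, y)) *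
            KLdiv (fun y => μ.1 (θ, y) / ∑ y', μ.1 (θ, y')) (p θ))
        + ENNReal.ofReal β * KLdiv (fun θ => ∑ y, μ.1 (θ, y)) q)
      = ENNReal.ofReal
          ((∑ y, D y * Real.log (1 / p θ₀ y))
            + β * Real.log (1 / q θ₀)
            - (∑ y, D y * Real.log (1 / D y))) := by
  classical
  have hDle : ∀ y, D y - p θ₀ y ≤ D y * Real.log (D y / p θ₀ y) := by
    intro y
    rcases (hD.1 y).eq_or_lt with h | h
    · rw [← h]; simp [(hp θ₀).1 y]
    · have hpy := hpos y h
      have h1 := Real.one_sub_inv_le_log_of_pos (div_pos h hpy)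
      have h2 := mul_le_mul_of_nonneg_left h1 h.le
      have h3 : D y * (1 - (D y / p θ₀ y)⁻¹) = D y - p θ₀ y := by
        field_simp
      linarith
  have hKL : 0 ≤ ∑ y, D y * Real.log (D y / p θ₀ y) := by
    have h := Finset.sum_le_sum (fun y (_ : y ∈ Finset.univ) => hDle y)
    rw [Finset.sum_sub_distrib, hD.2, (hp θ₀).2, sub_self] at h
    exact h
  have hqle : q θ₀ ≤ 1 := by
    rw [← hq.2]
    exact Finset.single_le_sum (fun i _ => hq.1 i) (Finset.mem_univ θ₀)
  have hlq : 0 ≤ Real.log (1 / q θ₀) :=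
    Real.log_nonneg (by rw [le_div_iff₀ hq₀]; linarith)
  have hrhs : (∑ y, D y * Real.log (1 / p θ₀ y)) + β * Real.log (1 / q θ₀)
      - (∑ y, D y * Real.log (1 / D y))
      = (∑ y, D y * Real.log (D y / p θ₀ y)) + β * Real.log (1 / q θ₀) := by
    have : ∑ y, D y * Real.log (D y / p θ₀ y)
        = (∑ y, D y * Real.log (1 / p θ₀ y)) - ∑ y, D y * Real.log (1 / D y) := by
      rw [← Finset.sum_sub_distrib]
      refine Finset.sum_congr rfl fun y _ => ?_
      rcases (hD.1 y).eq_or_lt with h | h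
      · rw [← h]; simp
      · rw [Real.log_div h.ne' (hpos y h).ne', one_div, one_div, Real.log_inv, Real.log_inv]
        ring
    rw [this]; ring
  have hne : Nonempty {μ : Θ × Y → ℝ // IsPMF μ
        ∧ (∀ θ, (∑ y, μ (θ, y)) = if θ = θ₀ then 1 else 0)
        ∧ (∀ y, (∑ θ, μ (θ, y)) = D y)} := by
    have hm : ∀ θ, (∑ y, if θ = θ₀ then D y else 0) = if θ = θ₀ then (1 : ℝ) else 0 := by
      intro θ
      split_ifs
      · exact hD.2
      · simp
    refine ⟨⟨fun x => if x.1 = θ₀ then D x.2 else 0, ⟨?_, ?_⟩, hm, ?_⟩⟩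
    · intro x
      dsimp only
      split_ifs
      · exact hD.1 _
      · exact le_rfl
    · rw [Fintype.sum_prod_type]
      simp only [hm]
      simp
    · intro y; simp
  rw [hrhs, ENNReal.ofReal_add hKL (mul_nonneg hβ hlq), ENNReal.ofReal_mul hβ]
  refine (iInf_congr ?_).trans iInf_const
  rintro ⟨μ, hμ, h1, h2⟩
  dsimp only
  have hz : ∀ θ, θ ≠ θ₀ → ∀ y, μ (θ, y) = 0 := by
    intro θ hθ y
    have h := h1 θ
    rw [if_neg hθ, Finset.sum_eq_zero_iff_of_nonneg (fun y _ => hμ.1 _)] at h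
    exact h y (Finset.mem_univ y)
  have h0 : ∀ y, μ (θ₀, y) = D y := by
    intro y
    rw [← h2 y]
    exact (Finset.sum_eq_single θ₀ (fun θ _ hθ => hz θ hθ y)
      (fun h => absurd (Finset.mem_univ _) h)).symm
  have hf : Finset.univ.filter (fun θ => 0 < ∑ y, μ (θ, y)) = {θ₀} := by
    ext θ
    simp only [Finset.mem_filter, Finset.mem_univ, true_and, Finset.mem_singleton, h1 θ]
    split_ifs with h <;> simp [h]
  rw [hf, Finset.sum_singleton]
  simp only [h0, hD.2, h1, div_one, ENNReal.ofReal_one, one_mul]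
  congr 1
  · unfold KLdiv
    rw [if_pos]
    intro y hy
    by_contra hne
    exact absurd hy (hpos y (lt_of_le_of_ne (hD.1 y) (Ne.symm hne))).ne'
  · congr 1
    unfold KLdiv
    rw [if_pos]
    · congr 1
      rw [Finset.sum_eq_single θ₀]
      · simp
      · intro θ _ hθ; simp [hθ]
      · intro h; exact absurd (Finset.mem_univ _) h
    · intro θ hθ
      dsimp only
      rw [if_neg]
      rintro rfl
      exact hq₀.ne' hθ
end

section
/- Let X be a finite type, let p and q be pmfs on X, and let r, s > 0. Then the infimum over all pmfs μ on X of r·D(μ‖p) + s·D(μ‖q) equals −(r+s)·log Σ_x ( p(x)^r · q(x)^s )^{1/(r+s)}, where both sides take values in [0,∞] (the right side being ∞ when the sum is 0, i.e., when p and q have disjoint supports). -/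
open scoped BigOperators ENNReal

theorem gibbs_aux_s9 {X : Type*} [Fintype X] (μ w : X → ℝ) (hμ : IsPMF μ) (hw : ∀ x, 0 ≤ w x)
    (hZ : 0 < ∑ x, w x) (hac : ∀ x, w x = 0 → μ x = 0) :
    -Real.log (∑ x, w x) ≤ ∑ x, μ x * Real.log (μ x / w x) := by
  set Z := ∑ x, w x with hZdef
  have key : ∀ x, μ x - w x / Z - μ x * Real.log Z ≤ μ x * Real.log (μ x / w x) := by
    intro x
    rcases (hμ.1 x).eq_or_lt with h | h
    · rw [← h]
      have := div_nonneg (hw x) hZ.le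
      simp only [zero_mul, zero_sub, sub_zero]
      linarith
    · have hwx : 0 < w x := lt_of_le_of_ne (hw x) (fun h0 => h.ne' (hac x h0.symm))
      have h1 := Real.log_le_sub_one_of_pos (x := w x / Z / μ x) (by positivity)
      rw [Real.log_div (by positivity) h.ne', Real.log_div hwx.ne' hZ.ne'] at h1
      rw [Real.log_div h.ne' hwx.ne']
      have h2 := mul_le_mul_of_nonneg_left h1 h.le
      have h3 : μ x * (w x / Z / μ x - 1) = w x / Z - μ x := by
        field_simp
      rw [h3] at h2
      linarith
  have h := Finset.sum_le_sum (fun x (_ : x ∈ Finset.univ) => key x)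
  rw [Finset.sum_sub_distrib, Finset.sum_sub_distrib, ← Finset.sum_div, ← Finset.sum_mul, hμ.2,
    ← hZdef, div_self hZ.ne'] at h
  linarith

theorem kl_sum_nonneg {X : Type*} [Fintype X] (μ p : X → ℝ) (hμ : IsPMF μ) (hp : IsPMF p)
    (hac : ∀ x, p x = 0 → μ x = 0) : 0 ≤ ∑ x, μ x * Real.log (μ x / p x) := by
  have h := gibbs_aux_s9 μ p hμ hp.1 (by rw [hp.2]; norm_num) hac
  rw [hp.2] at h
  simpa using h

theorem combine_aux {X : Type*} [Fintype X] (μ p q : X → ℝ) (hμ : IsPMF μ) (hp : IsPMF p)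
    (hq : IsPMF q) (r s : ℝ) (hr : 0 < r) (hs : 0 < s)
    (h1 : ∀ x, p x = 0 → μ x = 0) (h2 : ∀ x, q x = 0 → μ x = 0) :
    ENNReal.ofReal r * KLdiv μ p + ENNReal.ofReal s * KLdiv μ q =
      ENNReal.ofReal ((r + s) *
        ∑ x, μ x * Real.log (μ x / (p x ^ r * q x ^ s) ^ (1 / (r + s)))) := by
  have n1 := kl_sum_nonneg μ p hμ hp h1
  have n2 := kl_sum_nonneg μ q hμ hq h2
  unfold KLdiv
  rw [if_pos h1, if_pos h2, ← ENNReal.ofReal_mul hr.le, ← ENNReal.ofReal_mul hs.le,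
    ← ENNReal.ofReal_add (by positivity) (by positivity)]
  congr 1
  rw [Finset.mul_sum, Finset.mul_sum, Finset.mul_sum, ← Finset.sum_add_distrib]
  refine Finset.sum_congr rfl fun x _ => ?_
  by_cases h : μ x = 0
  · simp [h]
  have hpx : 0 < p x := lt_of_le_of_ne (hp.1 x) (fun h0 => h (h1 x h0.symm))
  have hqx : 0 < q x := lt_of_le_of_ne (hq.1 x) (fun h0 => h (h2 x h0.symm))
  have hP : 0 < p x ^ r := Real.rpow_pos_of_pos hpx r
  have hQ : 0 < q x ^ s := Real.rpow_pos_of_pos hqx s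
  rw [Real.log_div h hpx.ne', Real.log_div h hqx.ne',
    Real.log_div h (Real.rpow_pos_of_pos (mul_pos hP hQ) _).ne',
    Real.log_rpow (mul_pos hP hQ), Real.log_mul hP.ne' hQ.ne', Real.log_rpow hpx,
    Real.log_rpow hqx]
  have : r + s ≠ 0 := by positivity
  field_simp
  ring

/-- Closed form for the PDG divergence: the infimum over pmfs `μ` of
`r·D(μ‖p) + s·D(μ‖q)` equals `−(r+s)·log Σ_x (p(x)^r q(x)^s)^{1/(r+s)}`,
both sides being `∞` exactly when `p` and `q` have disjoint supports. -/
theorem pdg_divergence_closed_form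
    {X : Type*} [Fintype X]
    (p q : X → ℝ) (hp : IsPMF p) (hq : IsPMF q)
    (r s : ℝ) (hr : 0 < r) (hs : 0 < s) :
    (⨅ μ : {μ : X → ℝ // IsPMF μ},
        ENNReal.ofReal r * KLdiv μ.1 p + ENNReal.ofReal s * KLdiv μ.1 q)
      = (if (∑ x, (p x ^ r * q x ^ s) ^ (1 / (r + s))) = 0 then ⊤
          else ENNReal.ofReal
            (-(r + s) * Real.log (∑ x, (p x ^ r * q x ^ s) ^ (1 / (r + s))))) := by
  have hrs : 0 < r + s := add_pos hr hs
  have hrs' : 1 / (r + s) ≠ 0 := by positivity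
  have hg0 : ∀ x, 0 ≤ (p x ^ r * q x ^ s) ^ (1 / (r + s)) := fun x =>
    Real.rpow_nonneg (mul_nonneg (Real.rpow_nonneg (hp.1 x) _) (Real.rpow_nonneg (hq.1 x) _)) _
  have hgz : ∀ x, (p x ^ r * q x ^ s) ^ (1 / (r + s)) = 0 → p x = 0 ∨ q x = 0 := by
    intro x h
    by_contra! hc
    have hpx := lt_of_le_of_ne (hp.1 x) hc.1.symm
    have hqx := lt_of_le_of_ne (hq.1 x) hc.2.symm
    exact (Real.rpow_pos_of_pos (mul_pos (Real.rpow_pos_of_pos hpx r)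
      (Real.rpow_pos_of_pos hqx s)) (1 / (r + s))).ne' h
  have hrE : ENNReal.ofReal r ≠ 0 := by simpa using hr
  have hsE : ENNReal.ofReal s ≠ 0 := by simpa using hs
  apply le_antisymm
  · split_ifs with hZ
    · exact le_top
    have hZp : 0 < ∑ x, (p x ^ r * q x ^ s) ^ (1 / (r + s)) :=
      lt_of_le_of_ne (Finset.sum_nonneg fun x _ => hg0 x) (Ne.symm hZ)
    set Z := ∑ x, (p x ^ r * q x ^ s) ^ (1 / (r + s)) with hZdef
    have hμ : IsPMF (fun x => (p x ^ r * q x ^ s) ^ (1 / (r + s)) / Z) := by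
      refine ⟨fun x => div_nonneg (hg0 x) hZp.le, ?_⟩
      rw [← Finset.sum_div, ← hZdef, div_self hZ]
    refine iInf_le_of_le ⟨_, hμ⟩ ?_
    rw [combine_aux _ p q hμ hp hq r s hr hs
      (fun x h => by simp only [h, Real.zero_rpow hr.ne', zero_mul, Real.zero_rpow hrs', zero_div])
      (fun x h => by simp only [h, Real.zero_rpow hs.ne', mul_zero, Real.zero_rpow hrs', zero_div])]
    apply le_of_eq
    congr 1
    have : ∀ x, (p x ^ r * q x ^ s) ^ (1 / (r + s)) / Z *
        Real.log ((p x ^ r * q x ^ s) ^ (1 / (r + s)) / Z / (p x ^ r * q x ^ s) ^ (1 / (r + s)))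
        = (p x ^ r * q x ^ s) ^ (1 / (r + s)) / Z * (-Real.log Z) := by
      intro x
      by_cases h : (p x ^ r * q x ^ s) ^ (1 / (r + s)) = 0
      · simp only [h, zero_div, zero_mul]
      · rw [div_right_comm, div_self h, one_div Z, Real.log_inv]
    rw [Finset.sum_congr rfl (fun x _ => this x), ← Finset.sum_mul, hμ.2]
    ring
  · refine le_iInf fun ⟨μ, hμ⟩ => ?_
    by_cases h1 : ∀ x, p x = 0 → μ x = 0
    swap
    · have : KLdiv μ p = ⊤ := if_neg h1
      simp [this, ENNReal.mul_top hrE]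
    by_cases h2 : ∀ x, q x = 0 → μ x = 0
    swap
    · have : KLdiv μ q = ⊤ := if_neg h2
      simp [this, ENNReal.mul_top hsE]
    have hac : ∀ x, (p x ^ r * q x ^ s) ^ (1 / (r + s)) = 0 → μ x = 0 := fun x h =>
      (hgz x h).elim (h1 x) (h2 x)
    split_ifs with hZ
    · exfalso
      rw [Finset.sum_eq_zero_iff_of_nonneg (fun x _ => hg0 x)] at hZ
      have := hμ.2
      rw [Finset.sum_eq_zero (fun x hx => hac x (hZ x hx))] at this
      exact zero_ne_one this
    · have hZp : 0 < ∑ x, (p x ^ r * q x ^ s) ^ (1 / (r + s)) :=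
        lt_of_le_of_ne (Finset.sum_nonneg fun x _ => hg0 x) (Ne.symm hZ)
      show _ ≤ ENNReal.ofReal r * KLdiv μ p + ENNReal.ofReal s * KLdiv μ q
      rw [combine_aux μ p q hμ hp hq r s hr hs h1 h2]
      apply ENNReal.ofReal_le_ofReal
      have := mul_le_mul_of_nonneg_left (gibbs_aux_s9 μ _ hμ hg0 hZp hac) hrs.le
      linarith
end

section
/- Data processing inequality for PDG divergences: let X, Y be finite types, let k : X → (pmf on Y) be a stochastic map, let p, q be pmfs on X, and let β, ζ > 0. Define the pushforwards (k∘p)(y) := Σ_x p(x)·k(y|x) and (k∘q)(y) := Σ_x q(x)·k(y|x). Then inf over pmfs ν on Y of [ β·D(ν‖k∘p) + ζ·D(ν‖k∘q) ] ≤ inf over pmfs μ on X of [ β·D(μ‖p) + ζ·D(μ‖q) ]; equivalently, Σ_y ( (k∘p)(y)^β · (k∘q)(y)^ζ )^{1/(β+ζ)} ≥ Σ_x ( p(x)^β · q(x)^ζ )^{1/(β+ζ)}. -/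
open scoped BigOperators ENNReal

theorem log_sum_aux {X : Type*} [Fintype X] (a b : X → ℝ) (ha : ∀ x, 0 ≤ a x)
    (hb : ∀ x, 0 ≤ b x) (hab : ∀ x, b x = 0 → a x = 0) :
    (∑ x, a x) * Real.log ((∑ x, a x) / ∑ x, b x) ≤ ∑ x, a x * Real.log (a x / b x) := by
  rcases (Finset.sum_nonneg (fun x _ => ha x) : 0 ≤ ∑ x, a x).eq_or_lt with h | hA
  · have h0 : ∀ x, a x = 0 := fun x =>
      (Finset.sum_eq_zero_iff_of_nonneg (fun x _ => ha x)).1 h.symm x (Finset.mem_univ x)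
    simp [h0]
  have hB : 0 < ∑ x, b x := by
    rcases (Finset.sum_nonneg (fun x _ => hb x) : 0 ≤ ∑ x, b x).eq_or_lt with h | h
    · have h0 : ∀ x, a x = 0 := fun x => hab x
        ((Finset.sum_eq_zero_iff_of_nonneg (fun x _ => hb x)).1 h.symm x (Finset.mem_univ x))
      simp [h0] at hA
    · exact h
  set A := ∑ x, a x with hAd
  set B := ∑ x, b x with hBd
  have key : ∀ x, a x * Real.log (A / B) + a x - b x * (A / B) ≤ a x * Real.log (a x / b x) := by
    intro x
    rcases (ha x).eq_or_lt with h | h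
    · rw [← h]
      have := mul_nonneg (hb x) (div_pos hA hB).le
      simp only [zero_mul]; linarith
    · have hbx : 0 < b x := lt_of_le_of_ne (hb x) (fun e => h.ne' (hab x e.symm))
      have hl := Real.log_le_sub_one_of_pos (div_pos (div_pos hA hB) (div_pos h hbx))
      rw [Real.log_div (div_pos hA hB).ne' (div_pos h hbx).ne'] at hl
      have h2 := mul_le_mul_of_nonneg_left hl h.le
      have h3 : a x * (A / B / (a x / b x) - 1) = b x * (A / B) - a x := by
        field_simp
      rw [h3] at h2
      linarith
  have hs := Finset.sum_le_sum (fun x (_ : x ∈ Finset.univ) => key x)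
  rw [Finset.sum_sub_distrib, Finset.sum_add_distrib, ← Finset.sum_mul, ← Finset.sum_mul,
    ← hAd, ← hBd, mul_div_cancel₀ _ hB.ne'] at hs
  linarith

theorem KLdiv_push_le {X Y : Type*} [Fintype X] [Fintype Y]
    (k : X → Y → ℝ) (hk : ∀ x, IsPMF (k x)) (μ p : X → ℝ) (hμ : ∀ x, 0 ≤ μ x)
    (hp : ∀ x, 0 ≤ p x) (kp : Y → ℝ) (hkp : ∀ y, kp y = ∑ x, p x * k x y) :
    KLdiv (fun y => ∑ x, μ x * k x y) kp ≤ KLdiv μ p := by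
  obtain rfl : kp = fun y => ∑ x, p x * k x y := funext hkp
  unfold KLdiv
  by_cases hac : ∀ x, p x = 0 → μ x = 0
  · have hac' : ∀ x y, p x * k x y = 0 → μ x * k x y = 0 := by
      intro x y h
      rcases mul_eq_zero.1 h with h | h
      · simp [hac x h]
      · simp [h]
    rw [if_pos hac, if_pos]
    · apply ENNReal.ofReal_le_ofReal
      calc _ ≤ ∑ y, ∑ x, (μ x * k x y) * Real.log ((μ x * k x y) / (p x * k x y)) :=
            Finset.sum_le_sum fun y _ => log_sum_aux _ _
              (fun x => mul_nonneg (hμ x) ((hk x).1 y)) (fun x => mul_nonneg (hp x) ((hk x).1 y))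
              (fun x => hac' x y)
        _ = ∑ y, ∑ x, (μ x * Real.log (μ x / p x)) * k x y := by
            refine Finset.sum_congr rfl fun y _ => Finset.sum_congr rfl fun x _ => ?_
            by_cases h : k x y = 0
            · simp [h]
            · rw [mul_div_mul_right _ _ h]; ring
        _ = _ := by
            rw [Finset.sum_comm]
            refine Finset.sum_congr rfl fun x _ => ?_
            rw [← Finset.mul_sum, (hk x).2, mul_one]
    · intro y h
      have h0 := (Finset.sum_eq_zero_iff_of_nonneg
        (fun x _ => mul_nonneg (hp x) ((hk x).1 y))).1 h
      exact Finset.sum_eq_zero fun x hx => hac' x y (h0 x hx)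
  · rw [if_neg hac]; exact le_top

theorem holder_aux {X : Type*} [Fintype X] (a b : X → ℝ) (ha : ∀ x, 0 ≤ a x)
    (hb : ∀ x, 0 ≤ b x) (s t : ℝ) (hs : 0 < s) (ht : 0 < t) (hst : s + t = 1) :
    ∑ x, a x ^ s * b x ^ t ≤ (∑ x, a x) ^ s * (∑ x, b x) ^ t := by
  have hc : (1 / s).HolderConjugate (1 / t) := by
    rw [Real.holderConjugate_iff]
    refine ⟨?_, by simpa using hst⟩
    rw [lt_div_iff₀ hs]; linarith
  have := Real.inner_le_Lp_mul_Lq_of_nonneg Finset.univ hc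
    (f := fun x => a x ^ s) (g := fun x => b x ^ t)
    (fun x _ => Real.rpow_nonneg (ha x) _) (fun x _ => Real.rpow_nonneg (hb x) _)
  have e1 : ∀ x, (a x ^ s) ^ (1 / s) = a x := fun x => by
    rw [← Real.rpow_mul (ha x), mul_one_div_cancel hs.ne', Real.rpow_one]
  have e2 : ∀ x, (b x ^ t) ^ (1 / t) = b x := fun x => by
    rw [← Real.rpow_mul (hb x), mul_one_div_cancel ht.ne', Real.rpow_one]
  simpa only [e1, e2, one_div_one_div] using this

/-- Data-processing inequality for PDG divergences: pushing `p` and `q`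
forward along a stochastic map `k` can only decrease the PDG divergence
with confidences `(β, ζ)`; equivalently, the Hellinger-type sum
`Σ (·^β ·^ζ)^{1/(β+ζ)}` can only increase. -/
theorem pdg_divergence_data_processing
    {X Y : Type*} [Fintype X] [Fintype Y]
    (k : X → Y → ℝ) (hk : ∀ x, IsPMF (k x))
    (p q : X → ℝ) (hp : IsPMF p) (hq : IsPMF q)
    (β ζ : ℝ) (hβ : 0 < β) (hζ : 0 < ζ)
    (kp kq : Y → ℝ)
    (hkp : ∀ y, kp y = ∑ x, p x * k x y)
    (hkq : ∀ y, kq y = ∑ x, q x * k x y) :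
    (⨅ ν : {ν : Y → ℝ // IsPMF ν},
        ENNReal.ofReal β * KLdiv ν.1 kp + ENNReal.ofReal ζ * KLdiv ν.1 kq)
      ≤ (⨅ μ : {μ : X → ℝ // IsPMF μ},
          ENNReal.ofReal β * KLdiv μ.1 p + ENNReal.ofReal ζ * KLdiv μ.1 q)
    ∧ (∑ x, (p x ^ β * q x ^ ζ) ^ (1 / (β + ζ)))
        ≤ (∑ y, (kp y ^ β * kq y ^ ζ) ^ (1 / (β + ζ))) := by
  have hkp0 : ∀ y, 0 ≤ kp y := fun y => by
    rw [hkp]; exact Finset.sum_nonneg fun x _ => mul_nonneg (hp.1 x) ((hk x).1 y)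
  have hkq0 : ∀ y, 0 ≤ kq y := fun y => by
    rw [hkq]; exact Finset.sum_nonneg fun x _ => mul_nonneg (hq.1 x) ((hk x).1 y)
  constructor
  · refine le_iInf fun μ => ?_
    obtain ⟨μ, hμ⟩ := μ
    have hν : IsPMF (fun y => ∑ x, μ x * k x y) := by
      refine ⟨fun y => Finset.sum_nonneg fun x _ => mul_nonneg (hμ.1 x) ((hk x).1 y), ?_⟩
      rw [Finset.sum_comm, ← hμ.2]
      refine Finset.sum_congr rfl fun x _ => ?_
      rw [← Finset.mul_sum, (hk x).2, mul_one]
    refine (iInf_le _ ⟨_, hν⟩).trans ?_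
    exact add_le_add (mul_le_mul_right (KLdiv_push_le k hk μ p hμ.1 hp.1 kp hkp) _)
      (mul_le_mul_right (KLdiv_push_le k hk μ q hμ.1 hq.1 kq hkq) _)
  · have hsum : 0 < β + ζ := add_pos hβ hζ
    have hst : β / (β + ζ) + ζ / (β + ζ) = 1 := by field_simp
    have hs := div_pos hβ hsum
    have ht := div_pos hζ hsum
    have e : ∀ u v : ℝ, 0 ≤ u → 0 ≤ v → (u ^ β * v ^ ζ) ^ (1 / (β + ζ))
        = u ^ (β / (β + ζ)) * v ^ (ζ / (β + ζ)) := by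
      intro u v hu hv
      rw [Real.mul_rpow (Real.rpow_nonneg hu _) (Real.rpow_nonneg hv _),
        ← Real.rpow_mul hu, ← Real.rpow_mul hv, mul_one_div, mul_one_div]
    simp only [e _ _ (hp.1 _) (hq.1 _), e _ _ (hkp0 _) (hkq0 _)]
    generalize β / (β + ζ) = s at *
    generalize ζ / (β + ζ) = t at *
    calc ∑ x, p x ^ s * q x ^ t = ∑ x, ∑ y, (p x * k x y) ^ s * (q x * k x y) ^ t := by
          refine Finset.sum_congr rfl fun x _ => ?_
          rw [← mul_one (p x ^ s * q x ^ t), ← (hk x).2, Finset.mul_sum]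
          refine Finset.sum_congr rfl fun y _ => ?_
          have hky := (hk x).1 y
          have h1 : k x y ^ s * k x y ^ t = k x y := by
            rw [← Real.rpow_add_of_nonneg hky hs.le ht.le, hst, Real.rpow_one]
          rw [Real.mul_rpow (hp.1 x) hky, Real.mul_rpow (hq.1 x) hky]
          nth_rewrite 1 [← h1]
          ring
      _ = ∑ y, ∑ x, (p x * k x y) ^ s * (q x * k x y) ^ t := Finset.sum_comm
      _ ≤ _ := Finset.sum_le_sum fun y _ => by
          rw [hkp, hkq]
          exact holder_aux _ _ (fun x => mul_nonneg (hp.1 x) ((hk x).1 y))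
            (fun x => mul_nonneg (hq.1 x) ((hk x).1 y)) s t hs ht hst
end

section
/- Let Ω be a nonempty finite type, let J be a finite index set, let φ_j : Ω → ℝ with φ_j(ω) > 0 for all j ∈ J and ω ∈ Ω, and let θ_j ∈ ℝ for j ∈ J. Then the infimum, over all pmfs μ on Ω, of Σ_j θ_j · Σ_ω μ(ω)·log( 1/φ_j(ω) ) − H(μ) equals −log Z, where Z := Σ_ω Π_j φ_j(ω)^{θ_j} is the partition function; the infimum is attained uniquely at the Gibbs distribution μ*(ω) := (1/Z)·Π_j φ_j(ω)^{θ_j}. (In PDG terms: the 1-inconsistency of the PDG associated to a weighted factor graph equals minus the log partition function, i.e., the free energy.) -/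
open scoped BigOperators

lemma gibbs_term_aux (m g : ℝ) (hm : 0 ≤ m) (hg : 0 < g) :
    0 ≤ m * Real.log m - m * Real.log g - m + g ∧
    (m * Real.log m - m * Real.log g - m + g = 0 → m = g) := by
  rcases hm.eq_or_lt with h | h
  · subst h
    constructor
    · simp [hg.le]
    · intro h
      simpa using h.symm
  · have hq : 0 < g / m := div_pos hg h
    have e : m * Real.log m - m * Real.log g - m + g = m * (g / m - 1 - Real.log (g / m)) := by
      rw [Real.log_div hg.ne' h.ne']
      field_simp
      ring
    rw [e]
    constructor
    · exact mul_nonneg h.le (by linarith [Real.log_le_sub_one_of_pos hq])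
    · intro h0
      by_contra hne
      have h1 : g / m ≠ 1 := by
        intro h2
        rw [div_eq_one_iff_eq h.ne'] at h2
        exact hne h2.symm
      have := Real.log_lt_sub_one_of_pos hq h1
      have := mul_pos h (by linarith : 0 < g / m - 1 - Real.log (g / m))
      linarith

/-- Free energy as inconsistency: the minimal variational free energy
`Σ_j θ_j · E_μ[log(1/φ_j)] − H(μ)` over pmfs `μ` on `Ω` equals minus the
log of the partition function `Z = Σ_ω Π_j φ_j(ω)^{θ_j}`, and it is
attained exactly at the Gibbs distribution `μ*(ω) = (1/Z) Π_j φ_j(ω)^{θ_j}`. -/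
theorem free_energy_as_inconsistency
    {Ω J : Type*} [Fintype Ω] [Nonempty Ω] [Fintype J]
    (φ : J → Ω → ℝ) (hφ : ∀ j ω, 0 < φ j ω) (θ : J → ℝ)
    (Z : ℝ) (hZ : Z = ∑ ω, ∏ j, φ j ω ^ θ j)
    (gibbs : Ω → ℝ) (hgibbs : ∀ ω, gibbs ω = (∏ j, φ j ω ^ θ j) / Z)
    (F : (Ω → ℝ) → ℝ)
    (hF : ∀ μ, F μ = (∑ j, θ j * ∑ ω, μ ω * Real.log (1 / φ j ω))
        - (∑ ω, μ ω * Real.log (1 / μ ω))) :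
    (⨅ μ : {μ : Ω → ℝ // IsPMF μ}, F μ.1) = -Real.log Z
    ∧ IsPMF gibbs
    ∧ F gibbs = -Real.log Z
    ∧ (∀ μ : Ω → ℝ, IsPMF μ → F μ = -Real.log Z → μ = gibbs) := by
  have hw : ∀ ω, 0 < ∏ j, φ j ω ^ θ j := fun ω =>
    Finset.prod_pos fun j _ => Real.rpow_pos_of_pos (hφ j ω) _
  have hZp : 0 < Z := by
    rw [hZ]
    exact Finset.sum_pos (fun ω _ => hw ω) Finset.univ_nonempty
  have hgp : ∀ ω, 0 < gibbs ω := fun ω => by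
    rw [hgibbs]
    exact div_pos (hw ω) hZp
  have hgs : ∑ ω, gibbs ω = 1 := by
    simp only [hgibbs]
    rw [← Finset.sum_div, ← hZ, div_self hZp.ne']
  have hgl : ∀ ω, Real.log (gibbs ω) = (∑ j, θ j * Real.log (φ j ω)) - Real.log Z := fun ω => by
    rw [hgibbs, Real.log_div (hw ω).ne' hZp.ne',
      Real.log_prod (fun j _ => (Real.rpow_pos_of_pos (hφ j ω) _).ne')]
    simp only [Real.log_rpow (hφ _ ω)]
  have key : ∀ μ : Ω → ℝ, IsPMF μ → F μ = -Real.log Z +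
      ∑ ω, (μ ω * Real.log (μ ω) - μ ω * Real.log (gibbs ω) - μ ω + gibbs ω) := by
    intro μ hμ
    have e1 : ∑ j, θ j * ∑ ω, μ ω * Real.log (1 / φ j ω)
        = - ∑ ω, μ ω * ∑ j, θ j * Real.log (φ j ω) := by
      simp only [Finset.mul_sum]
      rw [Finset.sum_comm, ← Finset.sum_neg_distrib]
      refine Finset.sum_congr rfl fun ω _ => ?_
      rw [← Finset.sum_neg_distrib]
      refine Finset.sum_congr rfl fun j _ => ?_
      rw [one_div, Real.log_inv]
      ring
    rw [hF, e1]
    simp only [hgl, one_div, Real.log_inv, mul_sub, mul_neg, Finset.sum_add_distrib,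
      Finset.sum_sub_distrib, Finset.sum_neg_distrib, hgs, hμ.2]
    rw [← Finset.sum_mul, hμ.2]
    ring
  have hgpmf : IsPMF gibbs := ⟨fun ω => (hgp ω).le, hgs⟩
  have hge : F gibbs = -Real.log Z := by
    rw [key gibbs hgpmf]
    simp
  have hlb : ∀ μ : Ω → ℝ, IsPMF μ → -Real.log Z ≤ F μ := by
    intro μ hμ
    rw [key μ hμ]
    linarith [Finset.sum_nonneg fun ω (_ : ω ∈ Finset.univ) =>
      (gibbs_term_aux (μ ω) (gibbs ω) (hμ.1 ω) (hgp ω)).1]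
  refine ⟨?_, hgpmf, hge, ?_⟩
  · have : Nonempty {μ : Ω → ℝ // IsPMF μ} := ⟨⟨gibbs, hgpmf⟩⟩
    apply le_antisymm
    · rw [← hge]
      exact ciInf_le ⟨-Real.log Z, by rintro _ ⟨μ, rfl⟩; exact hlb μ.1 μ.2⟩
        (⟨gibbs, hgpmf⟩ : {μ : Ω → ℝ // IsPMF μ})
    · exact le_ciInf fun μ => hlb μ.1 μ.2
  · intro μ hμ h
    rw [key μ hμ] at h
    have h0 : ∑ ω, (μ ω * Real.log (μ ω) - μ ω * Real.log (gibbs ω) - μ ω + gibbs ω) = 0 := by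
      linarith
    rw [Finset.sum_eq_zero_iff_of_nonneg fun ω _ =>
      (gibbs_term_aux (μ ω) (gibbs ω) (hμ.1 ω) (hgp ω)).1] at h0
    funext ω
    exact (gibbs_term_aux (μ ω) (gibbs ω) (hμ.1 ω) (hgp ω)).2 (h0 ω (Finset.mem_univ _))
end
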